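/- (Wiebe's theorem, ring case) Let (a₁,…,aₙ) and (c₁,…,cₙ) be sequences in a commutative ring A with ⟨c⟩ ⊆ ⟨a⟩, certified by a square matrix U with U·(a₁,…,aₙ)ᵗ = (c₁,…,cₙ)ᵗ and Δ = det U. Assume (c₁,…,cₙ) is a regular sequence. Then (⟨c⟩ : Δ) = ⟨a⟩ and (⟨c⟩ : ⟨a⟩) = ⟨Δ⟩ + ⟨c⟩. -/

import Mathlib

/-!
For a regular sequence `c = U a`, replace the entries `cₙ, …, c₁` one at a time, starting from the
last, by generic combinations `bₖ = aₖ + X aₖ₋₁ + X² aₖ₋₂ + ⋯`, adjoining a new variable `X` each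
time.
Both `cₖ` and `bₖ` are non-zero-divisors modulo the ideal `K` of the remaining entries: for `bₖ`
this is McCoy's theorem, since its coefficients together with `K` generate an ideal containing `c`;
for `cₖ` it survives the earlier replacements because, modulo an ideal, if `c, b` is regular then
`c` stays regular modulo `b`.
If `W` is `U` with its `k`-th row replaced by that of `bₖ`, Cramer's rule gives
`det U * bₖ ≡ det W * cₖ` modulo `K`, and cancelling `bₖ` and `cₖ` shows that the theorem for `W`
implies the theorem for `U`.
Once all rows are replaced the matrix is lower unitriangular, so the two ideals coincide and the
determinant is `1`.
-/

section

open Polynomial Matrix nonZeroDivisors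

variable {A : Type*} [CommRing A]

section Quotient

variable {J : Ideal A}

theorem mem_span_singleton_sup_iff_mk {x y : A} :
    x ∈ Ideal.span {y} ⊔ J ↔
      ∃ z, Ideal.Quotient.mk J x = Ideal.Quotient.mk J z * Ideal.Quotient.mk J y := by
  simp only [← map_mul, Ideal.Quotient.eq, Ideal.mem_span_singleton_sup]
  constructor
  · rintro ⟨z, r, hr, rfl⟩
    exact ⟨z, by rwa [add_sub_cancel_left]⟩
  · rintro ⟨z, hz⟩
    exact ⟨z, _, hz, add_sub_cancel _ _⟩

theorem mk_mem_nonZeroDivisors_iff_isSMulRegular {x : A} :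
    Ideal.Quotient.mk J x ∈ (A ⧸ J)⁰ ↔ IsSMulRegular (A ⧸ J) x := by
  simp only [isSMulRegular_quotient_iff_mem_of_smul_mem, smul_eq_mul, mem_nonZeroDivisors_iff_left,
    Ideal.Quotient.mk_surjective.forall, ← map_mul, Ideal.Quotient.eq_zero_iff_mem]

theorem isSMulRegular_quotient_swap {b c : A} (hc : IsSMulRegular (A ⧸ J) c)
    (hb : IsSMulRegular (A ⧸ Ideal.span {c} ⊔ J) b) : IsSMulRegular (A ⧸ Ideal.span {b} ⊔ J) c := by
  refine (isSMulRegular_quotient_iff_mem_of_smul_mem _ _).mpr fun x hx ↦ ?_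
  obtain ⟨y, hy⟩ := mem_span_singleton_sup_iff_mk.mp hx
  rw [smul_eq_mul, map_mul] at hy
  have hby : b * y ∈ Ideal.span {c} ⊔ J :=
    mem_span_singleton_sup_iff_mk.mpr ⟨x, by rw [map_mul]; linear_combination -hy⟩
  obtain ⟨z, hz⟩ := mem_span_singleton_sup_iff_mk.mp
    (mem_of_isSMulRegular_quotient_of_smul_mem hb hby)
  refine mem_span_singleton_sup_iff_mk.mpr ⟨z, ?_⟩
  rw [← mul_cancel_right_mem_nonZeroDivisors (mk_mem_nonZeroDivisors_iff_isSMulRegular.mpr hc)]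
  linear_combination hy + Ideal.Quotient.mk J b * hz

theorem mem_nonZeroDivisors_of_mem_contentIdeal {f : A[X]} {y : A} (hy : y ∈ A⁰)
    (hf : y ∈ f.contentIdeal) : f ∈ A[X]⁰ := by
  refine Polynomial.mem_nonZeroDivisors_iff.mpr fun r hr ↦ ?_
  have hle : f.contentIdeal ≤ (⊥ : Ideal A).colon {r} := by
    refine Ideal.span_le.mpr fun s hs ↦ ?_
    obtain ⟨m, -, rfl⟩ := mem_coeffs_iff.mp hs
    simpa [Submodule.mem_colon_singleton, mul_comm] using congr(coeff $hr m)
  have hyr : y * r = 0 := by simpa [Submodule.mem_colon_singleton] using hle hf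
  exact (mem_nonZeroDivisors_iff_left.mp hy) r hyr

theorem isSMulRegular_quotient_map_C_of_mem_contentIdeal {f : A[X]} {y : A}
    (hy : IsSMulRegular (A ⧸ J) y) (hf : y ∈ f.contentIdeal ⊔ J) :
    IsSMulRegular (A[X] ⧸ J.map C) f := by
  have hf' : Ideal.Quotient.mk J y ∈ (f.map (Ideal.Quotient.mk J)).contentIdeal := by
    rw [contentIdeal_map_eq_map_contentIdeal]
    simpa [Ideal.map_sup] using Ideal.mem_map_of_mem (Ideal.Quotient.mk J) hf
  rw [← mk_mem_nonZeroDivisors_iff_isSMulRegular] at hy ⊢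
  rw [← Ideal.polynomialQuotientEquivQuotientPolynomial_map_mk,
    ← MulEquivClass.map_nonZeroDivisors J.polynomialQuotientEquivQuotientPolynomial]
  exact Submonoid.mem_map_of_mem _ (mem_nonZeroDivisors_of_mem_contentIdeal hy hf')

theorem isSMulRegular_quotient_map_C {y : A} (hy : IsSMulRegular (A ⧸ J) y) :
    IsSMulRegular (A[X] ⧸ J.map C) (C y) := by
  refine isSMulRegular_quotient_map_C_of_mem_contentIdeal hy (Ideal.mem_sup_left ?_)
  rw [contentIdeal_C]
  exact Ideal.mem_span_singleton_self y

end Quotient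

/-- `Δ` links `I` to `J` when the ideals `J` and `⟨Δ⟩ + I` are linked through `I` in the sense of
liaison theory, that is, each is the quotient of `I` by the other.
This is the conclusion of Wiebe's theorem, for `I = ⟨c⟩`, `J = ⟨a⟩` and `Δ = det U`. -/
structure IsPrincipallyLinked (I J : Ideal A) (Δ : A) : Prop where
  colon_span_singleton : I.colon (Ideal.span {Δ}) = J
  colon : I.colon J = Ideal.span {Δ} ⊔ I

namespace IsPrincipallyLinked

theorem mem_iff {I J : Ideal A} {Δ x : A} (h : IsPrincipallyLinked I J Δ) :
    x ∈ J ↔ x * Δ ∈ I := by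
  rw [← h.colon_span_singleton, Ideal.mem_colon_span_singleton]

theorem le {I J : Ideal A} {Δ : A} (h : IsPrincipallyLinked I J Δ) : I ≤ J :=
  fun _ hx ↦ h.mem_iff.mpr (I.mul_mem_right Δ hx)

theorem of_forall {I J : Ideal A} {Δ : A} (hmem : ∀ x, x ∈ J ↔ x * Δ ∈ I)
    (hcolon : ∀ x, (∀ y ∈ J, x * y ∈ I) → x ∈ Ideal.span {Δ} ⊔ I) :
    IsPrincipallyLinked I J Δ where
  colon_span_singleton := by
    ext x
    rw [Ideal.mem_colon_span_singleton, hmem]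
  colon := by
    refine le_antisymm (fun x hx ↦ hcolon x (Submodule.mem_colon.mp hx)) (sup_le ?_ Ideal.le_colon)
    rw [Ideal.span_singleton_le_iff_mem, Submodule.mem_colon]
    intro y hy
    rw [smul_eq_mul, mul_comm]
    exact (hmem y).mp hy

theorem refl_one (I : Ideal A) : IsPrincipallyLinked I I 1 :=
  of_forall (fun x ↦ by rw [mul_one]) (by simp)

theorem of_map {B : Type*} [CommRing B] {f : A →+* B}
    (hf : Function.LeftInverse (Ideal.comap f) (Ideal.map f)) {I J : Ideal A} {Δ : A}
    (h : IsPrincipallyLinked (I.map f) (J.map f) (f Δ)) : IsPrincipallyLinked I J Δ := by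
  have mem_map (L : Ideal A) (x : A) : f x ∈ L.map f ↔ x ∈ L := by
    rw [← Ideal.mem_comap, hf]
  refine of_forall (fun x ↦ ?_) fun x hx ↦ ?_
  · rw [← mem_map J, h.mem_iff, ← map_mul, mem_map]
  · rw [← mem_map, Ideal.map_sup, Ideal.map_span, Set.image_singleton, ← h.colon, Ideal.map,
      Ideal.map, Ideal.colon_span, Submodule.mem_colon]
    rintro _ ⟨y, hy, rfl⟩
    rw [smul_eq_mul, ← map_mul]
    exact Ideal.mem_map_of_mem f (hx y hy)

section Exchange

variable {K J : Ideal A} {b c d e : A}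

theorem mem_exchange (hc : IsSMulRegular (A ⧸ K) c)
    (h : Ideal.Quotient.mk K (d * b) = Ideal.Quotient.mk K (e * c))
    (hd : d ∈ Ideal.span {c} ⊔ K) : e ∈ Ideal.span {b} ⊔ K := by
  obtain ⟨y, hy⟩ := mem_span_singleton_sup_iff_mk.mp hd
  refine mem_span_singleton_sup_iff_mk.mpr ⟨y, ?_⟩
  rw [← mul_cancel_right_mem_nonZeroDivisors (mk_mem_nonZeroDivisors_iff_isSMulRegular.mpr hc)]
  simp only [map_mul] at h
  linear_combination Ideal.Quotient.mk K b * hy - h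

theorem exchange (hb : IsSMulRegular (A ⧸ K) b) (hc : IsSMulRegular (A ⧸ K) c)
    (h : Ideal.Quotient.mk K (d * b) = Ideal.Quotient.mk K (e * c))
    (hJ : IsPrincipallyLinked (Ideal.span {b} ⊔ K) J e) :
    IsPrincipallyLinked (Ideal.span {c} ⊔ K) J d := by
  have hmul (x : A) :
      Ideal.Quotient.mk K (x * d * b) = Ideal.Quotient.mk K (x * e * c) := by
    simp only [mul_assoc, map_mul _ x, h]
  refine of_forall
    (fun x ↦ hJ.mem_iff.trans ⟨mem_exchange hb (hmul x).symm, mem_exchange hc (hmul x)⟩)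
    fun x hx ↦ ?_
  have hbJ : b ∈ J := hJ.le (Ideal.mem_sup_left (Ideal.mem_span_singleton_self b))
  obtain ⟨y, hy⟩ := mem_span_singleton_sup_iff_mk.mp (hx b hbJ)
  have hyJ : y ∈ (Ideal.span {b} ⊔ K).colon (J : Set A) := by
    refine Submodule.mem_colon.mpr fun l hl ↦ mem_exchange hc ?_ (hx l hl)
    simp only [map_mul, smul_eq_mul] at hy ⊢
    linear_combination Ideal.Quotient.mk K l * hy
  rw [hJ.colon, Ideal.mem_span_singleton_sup] at hyJ
  obtain ⟨w, v, hv, rfl⟩ := hyJ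
  have hxw : x - w * d ∈ Ideal.span {c} ⊔ K := by
    refine mem_exchange hb ?_ hv
    simp only [map_mul, map_add, map_sub] at h hy ⊢
    linear_combination -hy + Ideal.Quotient.mk K w * h
  exact Ideal.mem_span_singleton_sup.mpr ⟨w, _, hxw, add_sub_cancel _ _⟩

end Exchange

end IsPrincipallyLinked

section Matrix

variable {m : Type*} [Fintype m]

theorem dotProduct_mem {I : Ideal A} {a : m → A} (ha : ∀ j, a j ∈ I) (t : m → A) : t ⬝ᵥ a ∈ I :=
  I.sum_mem fun j _ ↦ I.mul_mem_left (t j) (ha j)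

theorem span_range_mulVec_le (U : Matrix m m A) (a : m → A) :
    Ideal.span (Set.range (U *ᵥ a)) ≤ Ideal.span (Set.range a) := by
  refine Ideal.span_le.mpr (Set.range_subset_iff.mpr fun i ↦ ?_)
  exact dotProduct_mem (fun j ↦ Ideal.subset_span (Set.mem_range_self j)) (U i)

variable [DecidableEq m]

theorem det_mul_dotProduct (U : Matrix m m A) (t a : m → A) :
    U.det * (t ⬝ᵥ a) = ∑ j, (U.updateRow j t).det * (U *ᵥ a) j :=
  calc U.det * (t ⬝ᵥ a) = (Uᵀ *ᵥ cramer Uᵀ t) ⬝ᵥ a := by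
        rw [mulVec_cramer, det_transpose, smul_dotProduct, smul_eq_mul]
    _ = cramer Uᵀ t ⬝ᵥ (U *ᵥ a) := by rw [mulVec_transpose, dotProduct_mulVec]
    _ = ∑ j, (U.updateRow j t).det * (U *ᵥ a) j := by simp only [dotProduct, cramer_transpose_apply]

theorem mk_det_mul_dotProduct {K : Ideal A} {U : Matrix m m A} {a : m → A} {k : m}
    (hK : ∀ j ≠ k, (U *ᵥ a) j ∈ K) (t : m → A) :
    Ideal.Quotient.mk K (U.det * (t ⬝ᵥ a)) =
      Ideal.Quotient.mk K ((U.updateRow k t).det * (U *ᵥ a) k) := by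
  rw [det_mul_dotProduct, map_sum]
  refine Finset.sum_eq_single k (fun j _ hj ↦ ?_) (by simp)
  exact Ideal.Quotient.eq_zero_iff_mem.mpr (K.mul_mem_left _ (hK j hj))

theorem span_range_mulVec {U : Matrix m m A} (hU : IsUnit U.det) (a : m → A) :
    Ideal.span (Set.range (U *ᵥ a)) = Ideal.span (Set.range a) := by
  refine (span_range_mulVec_le U a).antisymm ?_
  simpa [mulVec_mulVec, nonsing_inv_mul _ hU] using span_range_mulVec_le U⁻¹ (U *ᵥ a)

end Matrix

variable {n : ℕ}

/-- The ideal generated by the entries of `c` with index outside the interval `[m, k)`. -/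
def spanOutside (c : Fin n → A) (m k : ℕ) : Ideal A :=
  Ideal.span (c '' {j | (j : ℕ) < m ∨ k ≤ j})

theorem mem_spanOutside {c : Fin n → A} {m k : ℕ} {j : Fin n} (hj : (j : ℕ) < m ∨ k ≤ j) :
    c j ∈ spanOutside c m k :=
  Ideal.subset_span (Set.mem_image_of_mem c hj)

theorem spanOutside_self (c : Fin n → A) (k : ℕ) :
    spanOutside c k k = Ideal.span (Set.range c) := by
  have h : {j : Fin n | (j : ℕ) < k ∨ k ≤ j} = Set.univ :=
    Set.eq_univ_of_forall fun j ↦ lt_or_ge (j : ℕ) k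
  rw [spanOutside, h, Set.image_univ]

theorem spanOutside_succ_left (c : Fin n → A) (m : Fin n) (k : ℕ) :
    spanOutside c (m + 1) k = Ideal.span {c m} ⊔ spanOutside c m k := by
  have h : {j : Fin n | (j : ℕ) < m + 1 ∨ k ≤ j} = insert m {j : Fin n | (j : ℕ) < m ∨ k ≤ j} := by
    ext j
    simp only [Set.mem_ofPred_eq, Set.mem_insert_iff, Fin.ext_iff]
    omega
  rw [spanOutside, h, Set.image_insert_eq, Ideal.span_insert, spanOutside]

theorem spanOutside_eq_sup_succ_right (c : Fin n → A) (m : ℕ) (k : Fin n) :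
    spanOutside c m k = Ideal.span {c k} ⊔ spanOutside c m (k + 1) := by
  have h : {j : Fin n | (j : ℕ) < m ∨ (k : ℕ) ≤ j} =
      insert k {j : Fin n | (j : ℕ) < m ∨ k + 1 ≤ (j : ℕ)} := by
    ext j
    simp only [Set.mem_ofPred_eq, Set.mem_insert_iff, Fin.ext_iff]
    omega
  rw [spanOutside, h, Set.image_insert_eq, Ideal.span_insert, spanOutside]

theorem map_spanOutside {B : Type*} [CommRing B] (f : A →+* B) (c : Fin n → A) (m k : ℕ) :
    (spanOutside c m k).map f = spanOutside (f ∘ c) m k := by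
  rw [spanOutside, Ideal.map_span, ← Set.image_comp, spanOutside]

theorem spanOutside_update (c : Fin n → A) {m : ℕ} {k : Fin n} (hm : m ≤ k) (b : A) :
    spanOutside (Function.update c k b) m k = Ideal.span {b} ⊔ spanOutside c m (k + 1) := by
  have h : Function.update c k b '' {j : Fin n | (j : ℕ) < m ∨ k + 1 ≤ (j : ℕ)} =
      c '' {j : Fin n | (j : ℕ) < m ∨ k + 1 ≤ (j : ℕ)} := by
    refine Set.image_congr fun j hj ↦ Function.update_of_ne ?_ _ _
    rintro rfl
    rcases hj with hj | hj <;> omega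
  rw [spanOutside_eq_sup_succ_right, Function.update_self, spanOutside, h, spanOutside]

/-- The entries of `c` with index below `k` form a regular sequence modulo the ideal generated by
the other entries. As for `RingTheory.Sequence.IsWeaklyRegular`, the quotient may be zero. -/
def IsRegularBelow (c : Fin n → A) (k : ℕ) : Prop :=
  ∀ i : Fin n, (i : ℕ) < k → IsSMulRegular (A ⧸ spanOutside c i k) (c i)

/-- The rows of `U` with index at least `k` are those of a lower unitriangular matrix. -/
def IsUnitriangularFrom (U : Matrix (Fin n) (Fin n) A) (k : ℕ) : Prop :=
  ∀ i : Fin n, k ≤ i → U i i = 1 ∧ ∀ j, i < j → U i j = 0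

theorem IsUnitriangularFrom.det_eq_one {U : Matrix (Fin n) (Fin n) A}
    (hU : IsUnitriangularFrom U 0) : U.det = 1 := by
  have hlower : U.IsLowerTriangular := fun i j hij ↦ (hU i (Nat.zero_le _)).2 j hij
  rw [det_of_isLowerTriangular U hlower]
  exact Finset.prod_eq_one fun i _ ↦ (hU i (Nat.zero_le _)).1

theorem IsUnitriangularFrom.mem_of_forall_lt {U : Matrix (Fin n) (Fin n) A} {k : ℕ}
    (hU : IsUnitriangularFrom U k) {a : Fin n → A} {I : Ideal A}
    (ha : ∀ j : Fin n, (j : ℕ) < k → a j ∈ I) (hc : ∀ j : Fin n, k ≤ j → (U *ᵥ a) j ∈ I)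
    (j : Fin n) : a j ∈ I := by
  induction j using WellFoundedLT.induction with
  | ind j ih =>
    obtain hjk | hkj := lt_or_ge (j : ℕ) k
    · exact ha j hjk
    obtain ⟨hdiag, hupper⟩ := hU j hkj
    have hsplit : (U *ᵥ a) j = a j + ∑ l ∈ Finset.univ.erase j, U j l * a l := by
      rw [mulVec, dotProduct, ← Finset.add_sum_erase _ _ (Finset.mem_univ j), hdiag, one_mul]
    have hrest : ∑ l ∈ Finset.univ.erase j, U j l * a l ∈ I := by
      refine I.sum_mem fun l hl ↦ ?_
      obtain hlj | hjl := lt_or_gt_of_ne (Finset.ne_of_mem_erase hl)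
      · exact I.mul_mem_left _ (ih l hlj)
      · simp [hupper l hjl]
    exact (I.add_mem_iff_left hrest).mp (hsplit ▸ hc j hkj)

/-- The row of coefficients of the generic combination `aₖ + X aₖ₋₁ + X² aₖ₋₂ + ⋯`. -/
noncomputable def genericRow (A : Type*) [CommRing A] (k : Fin n) : Fin n → A[X] :=
  fun j ↦ if j ≤ k then X ^ ((k : ℕ) - j) else 0

/-- The matrix `U`, over `A[X]`, with its `k`-th row made generic. -/
noncomputable def genericReplacement (U : Matrix (Fin n) (Fin n) A) (k : Fin n) :
    Matrix (Fin n) (Fin n) A[X] :=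
  (U.map C).updateRow k (genericRow A k)

theorem genericReplacement_mulVec (U : Matrix (Fin n) (Fin n) A) (k : Fin n) (a : Fin n → A) :
    genericReplacement U k *ᵥ (C ∘ a) =
      Function.update (C ∘ (U *ᵥ a)) k (genericRow A k ⬝ᵥ (C ∘ a)) := by
  rw [genericReplacement, updateRow_mulVec]
  congr 1
  ext1 i
  exact (RingHom.map_mulVec C U a i).symm

theorem isUnitriangularFrom_genericReplacement {U : Matrix (Fin n) (Fin n) A} {k : Fin n}
    (hU : IsUnitriangularFrom U (k + 1)) : IsUnitriangularFrom (genericReplacement U k) k := by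
  intro i hi
  obtain rfl | hik := eq_or_ne i k
  · simp +contextual [genericReplacement, genericRow]
  · obtain ⟨hdiag, hupper⟩ := hU i (by omega)
    simp +contextual [genericReplacement, updateRow_ne hik, hdiag, hupper]

theorem coeff_genericRow_dotProduct (a : Fin n → A) {j k : Fin n} (hj : j ≤ k) :
    (genericRow A k ⬝ᵥ (C ∘ a)).coeff ((k : ℕ) - j) = a j := by
  rw [dotProduct, finsetSum_coeff, Finset.sum_eq_single j]
  · simp [genericRow, hj]
  · intro l _ hl
    by_cases hlk : l ≤ k
    · have hne : (k : ℕ) - j ≠ k - l := by omega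
      simp [genericRow, hlk, coeff_X_pow, hne]
    · simp [genericRow, hlk]
  · simp

theorem mulVec_mem_contentIdeal_genericRow_sup {U : Matrix (Fin n) (Fin n) A} {k : Fin n}
    (hU : IsUnitriangularFrom U (k + 1)) (a : Fin n → A) (m : ℕ) (i : Fin n) :
    (U *ᵥ a) i ∈
      (genericRow A k ⬝ᵥ (C ∘ a)).contentIdeal ⊔ spanOutside (U *ᵥ a) m (k + 1) := by
  refine dotProduct_mem (hU.mem_of_forall_lt (fun j hj ↦ ?_) fun j hj ↦ ?_) (U i)
  · rw [← coeff_genericRow_dotProduct a (show j ≤ k by omega)]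
    exact Ideal.mem_sup_left (coeff_mem_contentIdeal _ _)
  · exact Ideal.mem_sup_right (mem_spanOutside (Or.inr hj))

theorem isSMulRegular_genericRow_dotProduct {U : Matrix (Fin n) (Fin n) A} {k : Fin n}
    {a : Fin n → A} (hU : IsUnitriangularFrom U (k + 1))
    (hreg : IsRegularBelow (U *ᵥ a) (k + 1)) {m : ℕ} (hm : m ≤ k) :
    IsSMulRegular (A[X] ⧸ (spanOutside (U *ᵥ a) m (k + 1)).map C) (genericRow A k ⬝ᵥ (C ∘ a)) :=
  isSMulRegular_quotient_map_C_of_mem_contentIdeal (hreg ⟨m, by omega⟩ (Nat.lt_succ_of_le hm))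
    (mulVec_mem_contentIdeal_genericRow_sup hU a m _)

theorem IsRegularBelow.update {c : Fin n → A} {k : Fin n} {b : A}
    (hc : IsRegularBelow c (k + 1))
    (hb : ∀ m ≤ (k : ℕ), IsSMulRegular (A ⧸ spanOutside c m (k + 1)) b) :
    IsRegularBelow (Function.update c k b) k := by
  intro i hi
  rw [spanOutside_update c hi.le, Function.update_of_ne (by omega)]
  refine isSMulRegular_quotient_swap (hc i (by omega)) ?_
  rw [← spanOutside_succ_left]
  exact hb _ hi

theorem IsRegularBelow.map_C {c : Fin n → A} {k : ℕ} (hc : IsRegularBelow c k) :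
    IsRegularBelow (C ∘ c) k := by
  intro i hi
  rw [← map_spanOutside]
  exact isSMulRegular_quotient_map_C (hc i hi)

theorem comap_C_map_C (I : Ideal A) : (I.map C).comap C = I := by
  ext x
  rw [Ideal.mem_comap, Ideal.mem_map_C_iff]
  refine ⟨fun h ↦ by simpa using h 0, fun h m ↦ ?_⟩
  rw [coeff_C]
  split_ifs
  exacts [h, I.zero_mem]

theorem mk_det_genericReplacement (U : Matrix (Fin n) (Fin n) A) (a : Fin n → A) (k : Fin n) :
    Ideal.Quotient.mk ((spanOutside (U *ᵥ a) k (k + 1)).map C)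
        (C U.det * (genericRow A k ⬝ᵥ (C ∘ a))) =
      Ideal.Quotient.mk ((spanOutside (U *ᵥ a) k (k + 1)).map C)
        ((genericReplacement U k).det * C ((U *ᵥ a) k)) := by
  have hmap (j : Fin n) : (U.map C *ᵥ (C ∘ a)) j = C ((U *ᵥ a) j) :=
    (RingHom.map_mulVec C U a j).symm
  have hdet : C U.det = (U.map C).det := RingHom.map_det C U
  rw [hdet, ← hmap]
  refine mk_det_mul_dotProduct (fun j hj ↦ ?_) _
  rw [hmap]
  exact Ideal.mem_map_of_mem C (mem_spanOutside (by omega))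

theorem IsPrincipallyLinked.of_genericReplacement {U : Matrix (Fin n) (Fin n) A} {k : Fin n}
    {a : Fin n → A} (hU : IsUnitriangularFrom U (k + 1))
    (hreg : IsRegularBelow (U *ᵥ a) (k + 1))
    (h : IsPrincipallyLinked (Ideal.span (Set.range (genericReplacement U k *ᵥ (C ∘ a))))
      (Ideal.span (Set.range (C ∘ a))) (genericReplacement U k).det) :
    IsPrincipallyLinked (Ideal.span (Set.range (U *ᵥ a))) (Ideal.span (Set.range a)) U.det := by
  set K : Ideal A := spanOutside (U *ᵥ a) k (k + 1)
  have hspan : Ideal.span (Set.range (U *ᵥ a)) = Ideal.span {(U *ᵥ a) k} ⊔ K := by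
    rw [← spanOutside_self _ k, spanOutside_eq_sup_succ_right]
  have hspan_generic : Ideal.span (Set.range (genericReplacement U k *ᵥ (C ∘ a))) =
      Ideal.span {genericRow A k ⬝ᵥ (C ∘ a)} ⊔ K.map C := by
    rw [← spanOutside_self _ k, genericReplacement_mulVec, spanOutside_update _ le_rfl,
      map_spanOutside]
  have hcramer := mk_det_genericReplacement U a k
  refine of_map comap_C_map_C ?_
  rw [hspan, Ideal.map_sup, Ideal.map_span C {_}, Set.image_singleton, Ideal.map_span,
    ← Set.range_comp]
  rw [hspan_generic] at h
  exact exchange (isSMulRegular_genericRow_dotProduct hU hreg le_rfl)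
    (isSMulRegular_quotient_map_C (hreg k k.val.lt_succ_self)) hcramer h

theorem isPrincipallyLinked_of_isRegularBelow {k : ℕ} (hk : k ≤ n) {U : Matrix (Fin n) (Fin n) A}
    {a : Fin n → A} (hU : IsUnitriangularFrom U k) (hreg : IsRegularBelow (U *ᵥ a) k) :
    IsPrincipallyLinked (Ideal.span (Set.range (U *ᵥ a))) (Ideal.span (Set.range a)) U.det := by
  induction k generalizing A with
  | zero =>
    rw [span_range_mulVec (by simp [hU.det_eq_one]), hU.det_eq_one]
    exact IsPrincipallyLinked.refl_one _
  | succ k ih =>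
    refine IsPrincipallyLinked.of_genericReplacement (k := ⟨k, hk⟩) hU hreg
      (ih (Nat.le_of_succ_le hk) (isUnitriangularFrom_genericReplacement hU) ?_)
    rw [genericReplacement_mulVec]
    refine hreg.map_C.update (k := ⟨k, hk⟩) fun m hm ↦ ?_
    rw [← map_spanOutside]
    exact isSMulRegular_genericRow_dotProduct hU hreg hm

end

theorem stmt17_general {A : Type*} [CommRing A] {n : ℕ} (a c : Fin n → A)
    (U : Matrix (Fin n) (Fin n) A) (hU : U.mulVec a = c)
    (hreg : ∀ i : Fin n, ∀ x : A,
      c i * x ∈ Ideal.span (c '' {j | j < i}) → x ∈ Ideal.span (c '' {j | j < i})) :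
    (Ideal.span (Set.range c)).colon (Ideal.span {U.det}) = Ideal.span (Set.range a)
    ∧ (Ideal.span (Set.range c)).colon (Ideal.span (Set.range a)) =
        Ideal.span {U.det} ⊔ Ideal.span (Set.range c) := by
  subst hU
  have hspan (i : Fin n) :
      spanOutside (U.mulVec a) i n = Ideal.span (U.mulVec a '' {j | j < i}) := by
    simp [spanOutside, not_le_of_gt]
  have hbelow : IsRegularBelow (U.mulVec a) n := fun i _ ↦
    (isSMulRegular_quotient_iff_mem_of_smul_mem _ _).mpr (hspan i ▸ hreg i)
  have htri : IsUnitriangularFrom U n := fun i hi ↦ absurd i.isLt (not_lt_of_ge hi)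
  have h := isPrincipallyLinked_of_isRegularBelow le_rfl htri hbelow
  exact ⟨h.colon_span_singleton, h.colon⟩

/-- Wiebe's theorem (ring case): if `U·aᵗ = cᵗ` with `Δ = det U`, and `(c₁,…,cₙ)` is a
regular sequence (completely secant: every permutation of it is a regular sequence), then
`(⟨c⟩ : Δ) = ⟨a⟩` and `(⟨c⟩ : ⟨a⟩) = ⟨Δ⟩ + ⟨c⟩`. -/
theorem stmt17 {A : Type*} [CommRing A] {n : ℕ} (a c : Fin n → A)
    (U : Matrix (Fin n) (Fin n) A) (hU : U.mulVec a = c)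
    (hreg : ∀ σ : Equiv.Perm (Fin n), ∀ i : Fin n, ∀ x : A,
      c (σ i) * x ∈ Ideal.span ((c ∘ σ) '' {j | j < i}) →
      x ∈ Ideal.span ((c ∘ σ) '' {j | j < i})) :
    (Ideal.span (Set.range c)).colon (Ideal.span {U.det}) = Ideal.span (Set.range a)
    ∧ (Ideal.span (Set.range c)).colon (Ideal.span (Set.range a)) =
        Ideal.span {U.det} ⊔ Ideal.span (Set.range c) :=
  stmt17_general a c U hU (hreg 1)
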